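/- arXiv:1811.07333 — 3 statements merged into one kernel-verified Lean document; each statement's English description precedes it below -/
import Mathlib

section
/- Let n ≥ 0 and let g : ℝ → ℝ be a differentiable function. Define the Dehn–Seidel twist map τ_g on {(x,y) ∈ ℝ^{n+1} × ℝ^{n+1} : y ≠ 0} by τ_g(x,y) = σ_{g(‖y‖)}(x,y). Then τ_g is a symplectomorphism of the punctured cotangent bundle model: for every (x,y) ∈ M_n with y ≠ 0 and all vectors a,b in the tangent space T_{(x,y)}M_n, one has ω(Dτ_g|_{(x,y)}(a), Dτ_g|_{(x,y)}(b)) = ω(a,b), where Dτ_g|_{(x,y)} is the Fréchet derivative of τ_g at (x,y). -/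
open scoped RealInnerProductSpace

/-- The map `σ_t(x,y) = (cos t · x + (sin t / ‖y‖) · y, −‖y‖ sin t · x + cos t · y)`. -/
noncomputable def sigmaT {m : ℕ} (t : ℝ)
    (p : EuclideanSpace ℝ (Fin m) × EuclideanSpace ℝ (Fin m)) :
    EuclideanSpace ℝ (Fin m) × EuclideanSpace ℝ (Fin m) :=
  (Real.cos t • p.1 + (Real.sin t / ‖p.2‖) • p.2,
   (-(‖p.2‖ * Real.sin t)) • p.1 + Real.cos t • p.2)

/-- The Dehn–Seidel twist with profile function `g`: `τ_g(x,y) = σ_{g(‖y‖)}(x,y)`. -/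
noncomputable def dehnTwist {m : ℕ} (g : ℝ → ℝ)
    (p : EuclideanSpace ℝ (Fin m) × EuclideanSpace ℝ (Fin m)) :
    EuclideanSpace ℝ (Fin m) × EuclideanSpace ℝ (Fin m) :=
  sigmaT (g ‖p.2‖) p

/-- The standard symplectic bilinear form `ω((a₁,a₂),(b₁,b₂)) = ⟪a₁,b₂⟫ − ⟪a₂,b₁⟫`
on `ℝ^m × ℝ^m`. -/
noncomputable def stdSymp {m : ℕ}
    (a b : EuclideanSpace ℝ (Fin m) × EuclideanSpace ℝ (Fin m)) : ℝ :=
  ⟪a.1, b.2⟫ - ⟪a.2, b.1⟫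

/-!
At radius `r = ‖y‖` the twist acts on the pair `(x, y)` through a matrix `M r ∈ SL₂(ℝ)`. Its
derivative at `p` is therefore `a ↦ M a + dr(a) • M' p`, where `M'` is the radial derivative of `M`.
The form `ω` is `SL₂`-invariant, so only the cross terms `dr(a) ω(M' p, M b) - dr(b) ω(M' p, M a)`
have to cancel. Now `ω(M' p, M a) = ω(K p, a)` with `K = adj(M) M'`, which is traceless because
`det M = 1`; its entries pair `a` with the differentials of `‖x‖²`, `⟪x, y⟫` and `‖y‖²`
(the moment map of `SL₂`), of which only the last survives when `a` is tangent to the level sets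
of `‖x‖` and `⟪x, y⟫`. Hence `ω(M' p, M a)` is a multiple of `dr(a)`, and the cross terms cancel.
-/

section MatrixAction

variable {𝕜 E : Type*} [NontriviallyNormedField 𝕜] [NormedAddCommGroup E] [NormedSpace 𝕜 E]

/-- The action of a `2 × 2` matrix on `E × E = 𝕜² ⊗ E`, i.e. on column vectors with two
entries in `E`. -/
noncomputable def matAct (M : Matrix (Fin 2) (Fin 2) 𝕜) : E × E →L[𝕜] E × E :=
  (M 0 0 • ContinuousLinearMap.fst 𝕜 E E + M 0 1 • ContinuousLinearMap.snd 𝕜 E E).prod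
    (M 1 0 • ContinuousLinearMap.fst 𝕜 E E + M 1 1 • ContinuousLinearMap.snd 𝕜 E E)

theorem matAct_apply (M : Matrix (Fin 2) (Fin 2) 𝕜) (p : E × E) :
    matAct M p = (M 0 0 • p.1 + M 0 1 • p.2, M 1 0 • p.1 + M 1 1 • p.2) :=
  rfl

theorem matAct_mul_apply (M N : Matrix (Fin 2) (Fin 2) 𝕜) (p : E × E) :
    matAct (M * N) p = matAct M (matAct N p) := by
  ext1 <;> simp only [matAct_apply, Matrix.mul_apply, Fin.sum_univ_two] <;> module

theorem matAct_smul_one_apply (c : 𝕜) (p : E × E) :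
    matAct (c • (1 : Matrix (Fin 2) (Fin 2) 𝕜)) p = c • p := by
  ext1 <;> simp [matAct_apply]

theorem hasFDerivAt_matAct {f : E × E → 𝕜} {f' : E × E →L[𝕜] 𝕜} {p : E × E}
    {M : 𝕜 → Matrix (Fin 2) (Fin 2) 𝕜} {M' : Matrix (Fin 2) (Fin 2) 𝕜}
    (hM : ∀ i j, HasDerivAt (fun r => M r i j) (M' i j) (f p)) (hf : HasFDerivAt f f' p) :
    HasFDerivAt (fun q => matAct (M (f q)) q)
      (matAct (M (f p)) + f'.smulRight (matAct M' p)) p := by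
  have entry (i j) : HasFDerivAt (fun q => M (f q) i j) (M' i j • f') p :=
    (hM i j).comp_hasFDerivAt p hf
  have row (i) : HasFDerivAt (fun q : E × E => M (f q) i 0 • q.1 + M (f q) i 1 • q.2) _ p :=
    ((entry i 0).smul hasFDerivAt_fst).add ((entry i 1).smul hasFDerivAt_snd)
  refine ((row 0).prodMk (row 1)).congr_fderiv (ContinuousLinearMap.ext fun a => ?_)
  ext1 <;> simp [matAct_apply] <;> module

end MatrixAction

theorem hasDerivAt_det_fin_two {𝕜 : Type*} [NontriviallyNormedField 𝕜]
    {M : 𝕜 → Matrix (Fin 2) (Fin 2) 𝕜} {M' : Matrix (Fin 2) (Fin 2) 𝕜} {r : 𝕜}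
    (hM : ∀ i j, HasDerivAt (fun s => M s i j) (M' i j) r) :
    HasDerivAt (fun s => (M s).det) ((M r).adjugate * M').trace r := by
  simp only [Matrix.det_fin_two]
  refine (((hM 0 0).mul (hM 1 1)).sub ((hM 0 1).mul (hM 1 0))).congr_deriv ?_
  simp only [Matrix.adjugate_fin_two, Matrix.trace_fin_two, Matrix.mul_apply, Fin.sum_univ_two,
    Matrix.of_apply, Matrix.cons_val_zero, Matrix.cons_val_one, Matrix.cons_val',
    Matrix.cons_val_fin_one]
  ring

section RadialDerivative

variable {E : Type*} [NormedAddCommGroup E] [InnerProductSpace ℝ E]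

theorem hasFDerivAt_norm {y : E} (hy : y ≠ 0) :
    HasFDerivAt (fun z : E => ‖z‖) (‖y‖⁻¹ • innerSL ℝ y) y := by
  have h := (hasFDerivAt_id (𝕜 := ℝ) y).norm_sq.sqrt (by simpa using hy)
  simp only [id, Real.sqrt_sq (norm_nonneg _)] at h
  refine h.congr_fderiv (ContinuousLinearMap.ext fun v => ?_)
  suffices 1 / (2 * ‖y‖) * (2 * ⟪y, v⟫) = ‖y‖⁻¹ * ⟪y, v⟫ by simpa using this
  field_simp

theorem fderiv_matAct_norm_snd_apply {M : ℝ → Matrix (Fin 2) (Fin 2) ℝ}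
    {M' : Matrix (Fin 2) (Fin 2) ℝ} {p : E × E} (hp : p.2 ≠ 0)
    (hM : ∀ i j, HasDerivAt (fun r => M r i j) (M' i j) ‖p.2‖) (a : E × E) :
    fderiv ℝ (fun q : E × E => matAct (M ‖q.2‖) q) p a =
      matAct (M ‖p.2‖) a + (‖p.2‖⁻¹ * ⟪p.2, a.2⟫) • matAct M' p := by
  have norm_snd : HasFDerivAt (fun q : E × E => ‖q.2‖) _ p :=
    (hasFDerivAt_norm hp).comp p hasFDerivAt_snd
  rw [(hasFDerivAt_matAct hM norm_snd).fderiv]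
  rfl

end RadialDerivative

section StdSymp

variable {m : ℕ}

theorem stdSymp_smul_left (c : ℝ) (a b : EuclideanSpace ℝ (Fin m) × EuclideanSpace ℝ (Fin m)) :
    stdSymp (c • a) b = c * stdSymp a b := by
  simp only [stdSymp, Prod.smul_fst, Prod.smul_snd, real_inner_smul_left]
  ring

theorem stdSymp_add_smul_add_smul
    {u v w : EuclideanSpace ℝ (Fin m) × EuclideanSpace ℝ (Fin m)} {s t : ℝ}
    (h : s * stdSymp w v = t * stdSymp w u) :
    stdSymp (u + s • w) (v + t • w) = stdSymp u v := by
  simp only [stdSymp, Prod.fst_add, Prod.snd_add, Prod.smul_fst, Prod.smul_snd, inner_add_left,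
    inner_add_right, real_inner_smul_left, real_inner_smul_right] at h ⊢
  rw [real_inner_comm w.2 u.1, real_inner_comm w.1 u.2, real_inner_comm w.2 w.1] at *
  linear_combination h

theorem stdSymp_matAct_right (M : Matrix (Fin 2) (Fin 2) ℝ)
    (a b : EuclideanSpace ℝ (Fin m) × EuclideanSpace ℝ (Fin m)) :
    stdSymp a (matAct M b) = stdSymp (matAct M.adjugate a) b := by
  simp only [stdSymp, matAct_apply, Matrix.adjugate_fin_two, Matrix.of_apply, Matrix.cons_val',
    Matrix.cons_val_zero, Matrix.cons_val_one, Matrix.cons_val_fin_one, inner_add_left,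
    inner_add_right, real_inner_smul_left, real_inner_smul_right]
  ring

theorem stdSymp_matAct_matAct (M : Matrix (Fin 2) (Fin 2) ℝ)
    (a b : EuclideanSpace ℝ (Fin m) × EuclideanSpace ℝ (Fin m)) :
    stdSymp (matAct M a) (matAct M b) = M.det * stdSymp a b := by
  rw [stdSymp_matAct_right, ← matAct_mul_apply, Matrix.adjugate_mul, matAct_smul_one_apply,
    stdSymp_smul_left]

theorem stdSymp_matAct_of_trace_eq_zero {K : Matrix (Fin 2) (Fin 2) ℝ} (hK : K.trace = 0)
    {x y : EuclideanSpace ℝ (Fin m)} {a : EuclideanSpace ℝ (Fin m) × EuclideanSpace ℝ (Fin m)}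
    (ha1 : ⟪x, a.1⟫ = 0) (ha2 : ⟪a.1, y⟫ + ⟪x, a.2⟫ = 0) :
    stdSymp (matAct K (x, y)) a = K 0 1 * ⟪y, a.2⟫ := by
  rw [Matrix.trace_fin_two] at hK
  rw [real_inner_comm] at ha2
  simp only [stdSymp, matAct_apply, inner_add_left, real_inner_smul_left]
  linear_combination K 0 0 * ha2 - K 1 0 * ha1 - ⟪y, a.1⟫ * hK

theorem stdSymp_fderiv_matAct_norm_snd {M : ℝ → Matrix (Fin 2) (Fin 2) ℝ}
    {x y : EuclideanSpace ℝ (Fin m)} (hy : y ≠ 0)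
    (hM : ∀ i j, DifferentiableAt ℝ (fun r => M r i j) ‖y‖)
    (hdet : ∀ᶠ r in nhds ‖y‖, (M r).det = 1)
    {a b : EuclideanSpace ℝ (Fin m) × EuclideanSpace ℝ (Fin m)}
    (ha1 : ⟪x, a.1⟫ = 0) (ha2 : ⟪a.1, y⟫ + ⟪x, a.2⟫ = 0)
    (hb1 : ⟪x, b.1⟫ = 0) (hb2 : ⟪b.1, y⟫ + ⟪x, b.2⟫ = 0) :
    stdSymp (fderiv ℝ (fun p => matAct (M ‖p.2‖) p) (x, y) a)
      (fderiv ℝ (fun p => matAct (M ‖p.2‖) p) (x, y) b) = stdSymp a b := by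
  set M' : Matrix (Fin 2) (Fin 2) ℝ := .of fun i j => deriv (fun r => M r i j) ‖y‖
  have hM' (i j) : HasDerivAt (fun r => M r i j) (M' i j) ‖y‖ := (hM i j).hasDerivAt
  set K := (M ‖y‖).adjugate * M'
  have trace_K : K.trace = 0 :=
    (hasDerivAt_det_fin_two hM').unique ((hasDerivAt_const ‖y‖ 1).congr_of_eventuallyEq hdet)
  have cross {c : EuclideanSpace ℝ (Fin m) × EuclideanSpace ℝ (Fin m)} (hc1 : ⟪x, c.1⟫ = 0)
      (hc2 : ⟪c.1, y⟫ + ⟪x, c.2⟫ = 0) :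
      stdSymp (matAct M' (x, y)) (matAct (M ‖y‖) c) = K 0 1 * ⟪y, c.2⟫ := by
    rw [stdSymp_matAct_right, ← matAct_mul_apply, stdSymp_matAct_of_trace_eq_zero trace_K hc1 hc2]
  have cancel : ‖y‖⁻¹ * ⟪y, a.2⟫ * stdSymp (matAct M' (x, y)) (matAct (M ‖y‖) b) =
      ‖y‖⁻¹ * ⟪y, b.2⟫ * stdSymp (matAct M' (x, y)) (matAct (M ‖y‖) a) := by
    rw [cross ha1 ha2, cross hb1 hb2]
    ring
  rw [fderiv_matAct_norm_snd_apply hy hM', fderiv_matAct_norm_snd_apply hy hM',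
    stdSymp_add_smul_add_smul cancel, stdSymp_matAct_matAct, hdet.self_of_nhds, one_mul]

end StdSymp

/-- The matrix of `σ_t` on the pairs `(x, y)` with `‖y‖ = r ≠ 0`. -/
noncomputable def sigmaMatrix (t r : ℝ) : Matrix (Fin 2) (Fin 2) ℝ :=
  !![Real.cos t, Real.sin t / r; -(r * Real.sin t), Real.cos t]

theorem det_sigmaMatrix (t : ℝ) {r : ℝ} (hr : r ≠ 0) : (sigmaMatrix t r).det = 1 := by
  rw [sigmaMatrix, Matrix.det_fin_two_of]
  field_simp
  linarith [Real.sin_sq_add_cos_sq t]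

theorem differentiableAt_sigmaMatrix {g : ℝ → ℝ} {r : ℝ} (hg : DifferentiableAt ℝ g r)
    (hr : r ≠ 0) (i j : Fin 2) : DifferentiableAt ℝ (fun s => sigmaMatrix (g s) s i j) r := by
  fin_cases i <;> fin_cases j
  · exact hg.cos
  · exact hg.sin.fun_div differentiableAt_id hr
  · exact (differentiableAt_id.fun_mul hg.sin).fun_neg
  · exact hg.cos

theorem dehnTwist_eq_matAct {m : ℕ} (g : ℝ → ℝ) :
    dehnTwist (m := m) g = fun p => matAct (sigmaMatrix (g ‖p.2‖) ‖p.2‖) p :=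
  rfl

theorem stmt_6_general {m : ℕ} {g : ℝ → ℝ} {x y : EuclideanSpace ℝ (Fin m)}
    (hg : DifferentiableAt ℝ g ‖y‖) (hy : y ≠ 0)
    {a b : EuclideanSpace ℝ (Fin m) × EuclideanSpace ℝ (Fin m)}
    (ha1 : ⟪x, a.1⟫ = 0) (ha2 : ⟪a.1, y⟫ + ⟪x, a.2⟫ = 0)
    (hb1 : ⟪x, b.1⟫ = 0) (hb2 : ⟪b.1, y⟫ + ⟪x, b.2⟫ = 0) :
    stdSymp (fderiv ℝ (dehnTwist g) (x, y) a) (fderiv ℝ (dehnTwist g) (x, y) b) =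
      stdSymp a b := by
  have hr : ‖y‖ ≠ 0 := norm_ne_zero_iff.mpr hy
  have hdet : ∀ᶠ r in nhds ‖y‖, (sigmaMatrix (g r) r).det = 1 :=
    (eventually_ne_nhds hr).mono fun r => det_sigmaMatrix (g r)
  rw [dehnTwist_eq_matAct]
  exact stdSymp_fderiv_matAct_norm_snd hy (differentiableAt_sigmaMatrix hg hr) hdet ha1 ha2 hb1 hb2

/-- The Dehn–Seidel twist `τ_g` is a symplectomorphism of the punctured cotangent bundle
model: on tangent vectors to `M_n` at `(x,y) ∈ M_n` with `y ≠ 0`,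
`ω(Dτ_g(a), Dτ_g(b)) = ω(a,b)`. -/
theorem stmt_6 (n : ℕ) (g : ℝ → ℝ) (hg : Differentiable ℝ g)
    (x y : EuclideanSpace ℝ (Fin (n + 1)))
    (hx : ‖x‖ = 1) (hxy : ⟪x, y⟫ = 0) (hy : y ≠ 0)
    (a b : EuclideanSpace ℝ (Fin (n + 1)) × EuclideanSpace ℝ (Fin (n + 1)))
    (ha1 : ⟪x, a.1⟫ = 0) (ha2 : ⟪a.1, y⟫ + ⟪x, a.2⟫ = 0)
    (hb1 : ⟪x, b.1⟫ = 0) (hb2 : ⟪b.1, y⟫ + ⟪x, b.2⟫ = 0) :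
    stdSymp (fderiv ℝ (dehnTwist g) (x, y) a) (fderiv ℝ (dehnTwist g) (x, y) b) =
      stdSymp a b :=
  stmt_6_general (hg _) hy ha1 ha2 hb1 hb2
end

section
/- Let n ≥ 0, let ε > 0 and δ > 0, set m₀ = (1/2)·min(ε,δ), and let g : ℝ → ℝ satisfy g(s) > ε/2 for all s with 0 ≤ s ≤ δ/2. Let g' : ℝ → ℝ be a function with g'(s) = 0 for all s ≥ m₀. Then for every (x,y) ∈ M_n, the point p = ((x,0),(y,g(‖y‖))) ∈ ℝ^{n+2} × ℝ^{n+2} has nonzero second component with ‖(y,g(‖y‖))‖ > m₀, and the Dehn–Seidel twist with profile g' fixes p: σ_{g'(‖(y,g(‖y‖))‖)}((x,0),(y,g(‖y‖))) = ((x,0),(y,g(‖y‖))). (This is the key step in the proof of Theorem 1.1: a Dehn–Seidel twist on DT*S^{n+1} with support smaller than m₀ does not move the pushed-off copy j₁(DT*Sⁿ).) -/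
open scoped RealInnerProductSpace

/-- Append a real coordinate to a vector in Euclidean space:
`snocE v c = (v, c) ∈ ℝ^{m+1}`. -/
noncomputable def snocE {m : ℕ} (v : EuclideanSpace ℝ (Fin m)) (c : ℝ) :
    EuclideanSpace ℝ (Fin (m + 1)) :=
  (EuclideanSpace.equiv (Fin (m + 1)) ℝ).symm (Fin.snoc ((EuclideanSpace.equiv (Fin m) ℝ) v) c)

section AppendCoordinate

variable {m : ℕ} (v : EuclideanSpace ℝ (Fin m)) (c : ℝ)

theorem norm_sq_snocE : ‖snocE v c‖ ^ 2 = ‖v‖ ^ 2 + c ^ 2 := by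
  simp [EuclideanSpace.norm_sq_eq, snocE, Fin.sum_univ_castSucc]

theorem norm_le_norm_snocE : ‖v‖ ≤ ‖snocE v c‖ := by
  refine le_of_sq_le_sq ?_ (norm_nonneg _)
  rw [norm_sq_snocE]
  exact le_add_of_nonneg_right (sq_nonneg c)

theorem abs_le_norm_snocE : |c| ≤ ‖snocE v c‖ := by
  refine abs_le_of_sq_le_sq ?_ (norm_nonneg _)
  rw [norm_sq_snocE]
  exact le_add_of_nonneg_left (sq_nonneg ‖v‖)

variable {v c}

theorem lt_norm_snocE {r : ℝ} (h : ‖v‖ ≤ r → r < |c|) : r < ‖snocE v c‖ := by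
  rcases le_or_gt ‖v‖ r with hv | hv
  · exact (h hv).trans_le (abs_le_norm_snocE v c)
  · exact hv.trans_le (norm_le_norm_snocE v c)

end AppendCoordinate

theorem sigmaT_zero {m : ℕ} (p : EuclideanSpace ℝ (Fin m) × EuclideanSpace ℝ (Fin m)) :
    sigmaT 0 p = p := by
  simp [sigmaT]

theorem stmt_10_general {m : ℕ} {m₀ : ℝ} (hm₀ : 0 < m₀)
    {g : ℝ → ℝ} (hg : ∀ s, 0 ≤ s → s ≤ m₀ → m₀ < |g s|)
    {g' : ℝ → ℝ} (hg' : ∀ s, m₀ ≤ s → g' s = 0)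
    (u : EuclideanSpace ℝ (Fin (m + 1))) (y : EuclideanSpace ℝ (Fin m)) :
    snocE y (g ‖y‖) ≠ 0 ∧ m₀ < ‖snocE y (g ‖y‖)‖ ∧
      sigmaT (g' ‖snocE y (g ‖y‖)‖) (u, snocE y (g ‖y‖)) = (u, snocE y (g ‖y‖)) := by
  have hlt : m₀ < ‖snocE y (g ‖y‖)‖ := lt_norm_snocE (hg ‖y‖ (norm_nonneg y))
  refine ⟨norm_pos_iff.mp (hm₀.trans hlt), hlt, ?_⟩
  rw [hg' _ hlt.le, sigmaT_zero]

/-- A Dehn–Seidel twist on `DT*S^{n+1}` with profile supported below `m₀ = (1/2)·min(ε,δ)`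
does not move the pushed-off copy `j₁(DT*Sⁿ)`: for `(x,y) ∈ M_n`, the point
`p = ((x,0),(y,g(‖y‖)))` has second component of norm `> m₀` (in particular nonzero),
and `σ_{g'(‖(y,g(‖y‖))‖)}` fixes `p`. -/
theorem stmt_10 (n : ℕ) (ε δ : ℝ) (hε : 0 < ε) (hδ : 0 < δ)
    (m₀ : ℝ) (hm₀ : m₀ = (1 / 2) * min ε δ)
    (g : ℝ → ℝ) (hg : ∀ s : ℝ, 0 ≤ s → s ≤ δ / 2 → ε / 2 < g s)
    (g' : ℝ → ℝ) (hg' : ∀ s : ℝ, m₀ ≤ s → g' s = 0)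
    (x y : EuclideanSpace ℝ (Fin (n + 1)))
    (hx : ‖x‖ = 1) (hxy : ⟪x, y⟫ = 0) :
    snocE y (g ‖y‖) ≠ 0 ∧ m₀ < ‖snocE y (g ‖y‖)‖ ∧
      sigmaT (g' ‖snocE y (g ‖y‖)‖) (snocE x 0, snocE y (g ‖y‖)) =
        (snocE x 0, snocE y (g ‖y‖)) := by
  have hpos : 0 < m₀ := by rw [hm₀]; positivity
  have hε' : m₀ ≤ ε / 2 := by linarith [min_le_left ε δ]
  have hδ' : m₀ ≤ δ / 2 := by linarith [min_le_right ε δ]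
  have hg_abs (s : ℝ) (hs : 0 ≤ s) (hsm : s ≤ m₀) : m₀ < |g s| :=
    (hε'.trans_lt (hg s hs (hsm.trans hδ'))).trans_le (le_abs_self _)
  exact stmt_10_general hpos hg_abs hg' (snocE x 0) y
end

section
/- Let n ≥ 0 and let g : ℝ → ℝ be differentiable. Define τ_g on the open set {(x,y) ∈ ℝ^{n+1} × ℝ^{n+1} : y ≠ 0} by τ_g(x,y) = σ_{g(‖y‖)}(x,y). Then for every (x,y) ∈ M_n with y ≠ 0, the Fréchet derivative of τ_g at (x,y) maps the tangent space T_{(x,y)}M_n into the tangent space T_{τ_g(x,y)}M_n. (This is needed for the Dehn–Seidel twist to be a well-defined diffeomorphism of the manifold T*Sⁿ.) -/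
open scoped RealInnerProductSpace

/-!
The model `M` is the common zero set of `F (x, y) = ‖x‖ ^ 2 - 1` and `G (x, y) = ⟪x, y⟫`, and its
tangent spaces are the common kernels of `dF` and `dG`. Where `y ≠ 0`, both `F ∘ τ_g` and `G ∘ τ_g`
are combinations of `F` and `G` with continuous coefficients. As `F` and `G` vanish on `M`, the
derivatives of the coefficients do not contribute there: `d(F ∘ τ_g)` and `d(G ∘ τ_g)` are the same
combinations of `dF` and `dG`, so `dτ_g` preserves the common kernel.
-/

open scoped Topology

section CommonZero

variable {𝕜 V W X : Type*} [NontriviallyNormedField 𝕜] [NormedAddCommGroup V] [NormedSpace 𝕜 V]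
  [NormedAddCommGroup W] [NormedSpace 𝕜 W] [NormedAddCommGroup X] [NormedSpace 𝕜 X]

theorem hasFDerivAt_smul_of_eq_zero {c : V → 𝕜} {f : V → X} {f' : V →L[𝕜] X} {p : V}
    (hc : ContinuousAt c p) (hf : HasFDerivAt f f' p) (hfp : f p = 0) :
    HasFDerivAt (fun q => c q • f q) (c p • f') p := by
  have hf_isBigO : f =O[𝓝 p] fun q => q - p := by
    simpa only [hfp, sub_zero] using hf.isBigO_sub
  have hc_isLittleO : (fun q => c q - c p) =o[𝓝 p] fun _ => (1 : 𝕜) :=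
    (Asymptotics.isLittleO_one_iff 𝕜).2 (tendsto_sub_nhds_zero_iff.2 hc)
  have hvariation : (fun q => (c q - c p) • f q) =o[𝓝 p] fun q => q - p := by
    simpa only [one_smul] using hc_isLittleO.smul_isBigO hf_isBigO
  have hlinear : (fun q => c p • (f q - f p - f' (q - p))) =o[𝓝 p] fun q => q - p :=
    hf.isLittleO.const_smul_left (c p)
  refine .of_isLittleO ((hvariation.add hlinear).congr_left fun q => ?_)
  simp only [hfp, FunLike.coe_smul, Pi.smul_apply]
  module

theorem apply_eq_zero_of_comp_eventuallyEq_smul_add_smul {τ : V → W} {h : W → X} {f g : V → X}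
    {c d : V → 𝕜} {τ' : V →L[𝕜] W} {h' : W →L[𝕜] X} {f' g' : V →L[𝕜] X} {p a : V}
    (hτ : HasFDerivAt τ τ' p) (hh : HasFDerivAt h h' (τ p))
    (hf : HasFDerivAt f f' p) (hg : HasFDerivAt g g' p) (hfp : f p = 0) (hgp : g p = 0)
    (hc : ContinuousAt c p) (hd : ContinuousAt d p)
    (hcomp : h ∘ τ =ᶠ[𝓝 p] fun q => c q • f q + d q • g q)
    (hfa : f' a = 0) (hga : g' a = 0) : h' (τ' a) = 0 := by
  have hderiv : h' ∘L τ' = c p • f' + d p • g' :=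
    (hh.comp p hτ).unique <|
      ((hasFDerivAt_smul_of_eq_zero hc hf hfp).add
        (hasFDerivAt_smul_of_eq_zero hd hg hgp)).congr_of_eventuallyEq hcomp
  simpa [hfa, hga] using DFunLike.congr_fun hderiv a

end CommonZero

section SphereCotangentBundle

variable {E : Type*} [NormedAddCommGroup E] [InnerProductSpace ℝ E]

variable (E) in
/-- The standard model of the cotangent bundle of the unit sphere of `E`, as a subset of `E × E`. -/
def sphereCotangentBundle : Set (E × E) :=
  {p | ‖p.1‖ = 1 ∧ ⟪p.1, p.2⟫ = 0}

/-- The tangent space to `sphereCotangentBundle E` at `p`, encoded as the common kernel of the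
derivatives of the defining functions `‖x‖ ^ 2 - 1` (up to the factor `2`) and `⟪x, y⟫`. -/
noncomputable def sphereCotangentTangentSpace (p : E × E) : Submodule ℝ (E × E) :=
  (innerSL ℝ p.1 ∘L .fst ℝ E E).ker ⊓ (fderivInnerCLM ℝ p).ker

theorem mem_sphereCotangentTangentSpace {p a : E × E} :
    a ∈ sphereCotangentTangentSpace p ↔ ⟪p.1, a.1⟫ = 0 ∧ ⟪a.1, p.2⟫ + ⟪p.1, a.2⟫ = 0 := by
  rw [add_comm]
  rfl

theorem hasFDerivAt_norm_fst_sq_sub_one (p : E × E) :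
    HasFDerivAt (fun q : E × E => ‖q.1‖ ^ 2 - 1) (2 • innerSL ℝ p.1 ∘L .fst ℝ E E) p :=
  hasFDerivAt_fst.norm_sq.sub_const 1

theorem hasFDerivAt_inner_fst_snd (p : E × E) :
    HasFDerivAt (fun q : E × E => ⟪q.1, q.2⟫) (fderivInnerCLM ℝ p) p :=
  isBoundedBilinearMap_inner.hasFDerivAt p

/-- The map `σ_t` on `E × E` for an arbitrary real inner product space `E`. On
`sphereCotangentBundle E` away from `y = 0`, it is the time-`t` normalized geodesic flow. -/
noncomputable def normalizedGeodesicFlow (t : ℝ) (p : E × E) : E × E :=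
  (Real.cos t • p.1 + (Real.sin t / ‖p.2‖) • p.2,
    (-(‖p.2‖ * Real.sin t)) • p.1 + Real.cos t • p.2)

theorem norm_normalizedGeodesicFlow_fst_sq_sub_one (t : ℝ) {p : E × E} (hp : p.2 ≠ 0) :
    ‖(normalizedGeodesicFlow t p).1‖ ^ 2 - 1 =
      Real.cos t ^ 2 * (‖p.1‖ ^ 2 - 1) +
        2 * Real.sin t * Real.cos t / ‖p.2‖ * ⟪p.1, p.2⟫ := by
  have hnorm : ‖p.2‖ ≠ 0 := norm_ne_zero_iff.mpr hp
  simp only [normalizedGeodesicFlow, norm_add_sq_real, norm_smul, inner_smul_left,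
    inner_smul_right, conj_trivial, mul_pow, Real.norm_eq_abs, sq_abs]
  field_simp
  rw [Real.sin_sq]
  ring

theorem inner_normalizedGeodesicFlow_fst_snd (t : ℝ) {p : E × E} (hp : p.2 ≠ 0) :
    ⟪(normalizedGeodesicFlow t p).1, (normalizedGeodesicFlow t p).2⟫ =
      -(‖p.2‖ * Real.sin t * Real.cos t) * (‖p.1‖ ^ 2 - 1) +
        (Real.cos t ^ 2 - Real.sin t ^ 2) * ⟪p.1, p.2⟫ := by
  have hnorm : ‖p.2‖ ≠ 0 := norm_ne_zero_iff.mpr hp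
  simp only [normalizedGeodesicFlow, inner_add_left, inner_add_right, inner_smul_left,
    inner_smul_right, conj_trivial, real_inner_self_eq_norm_sq, real_inner_comm p.1 p.2]
  field_simp
  ring

theorem differentiableAt_normalizedGeodesicFlow {t : E × E → ℝ} {p : E × E}
    (ht : DifferentiableAt ℝ t p) (hp : p.2 ≠ 0) :
    DifferentiableAt ℝ (fun q => normalizedGeodesicFlow (t q) q) p := by
  have hnorm : ‖p.2‖ ≠ 0 := norm_ne_zero_iff.mpr hp
  have hdiff_norm : DifferentiableAt ℝ (fun q : E × E => ‖q.2‖) p := differentiableAt_snd.norm ℝ hp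
  unfold normalizedGeodesicFlow
  fun_prop (disch := assumption)

theorem stmt_12_general {t : E × E → ℝ} {p : E × E} (ht : DifferentiableAt ℝ t p)
    (hpM : p ∈ sphereCotangentBundle E) (hp : p.2 ≠ 0) :
    Set.MapsTo (fderiv ℝ (fun q => normalizedGeodesicFlow (t q) q) p)
      (sphereCotangentTangentSpace p)
      (sphereCotangentTangentSpace (normalizedGeodesicFlow (t p) p)) := by
  rintro a ⟨ha_fst, ha_inner⟩
  have hnorm : ‖p.2‖ ≠ 0 := norm_ne_zero_iff.mpr hp
  have ht_cont : ContinuousAt t p := ht.continuousAt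
  have hnear : ∀ᶠ q : E × E in 𝓝 p, q.2 ≠ 0 := continuousAt_snd.eventually_ne hp
  have hflow := (differentiableAt_normalizedGeodesicFlow ht hp).hasFDerivAt
  have hkernel {h : E × E → ℝ} {h' : E × E →L[ℝ] ℝ} {c d : E × E → ℝ}
      (hh : HasFDerivAt h h' (normalizedGeodesicFlow (t p) p))
      (hc : ContinuousAt c p) (hd : ContinuousAt d p)
      (hcomp : ∀ q : E × E, q.2 ≠ 0 → h (normalizedGeodesicFlow (t q) q) =
        c q * (‖q.1‖ ^ 2 - 1) + d q * ⟪q.1, q.2⟫) :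
      h' (fderiv ℝ (fun q => normalizedGeodesicFlow (t q) q) p a) = 0 :=
    apply_eq_zero_of_comp_eventuallyEq_smul_add_smul hflow hh
      (hasFDerivAt_norm_fst_sq_sub_one p) (hasFDerivAt_inner_fst_snd p)
      (by simp [hpM.1]) hpM.2 hc hd (hnear.mono hcomp) (by simpa using ha_fst) ha_inner
  constructor
  · simpa using hkernel (hasFDerivAt_norm_fst_sq_sub_one _)
      (by fun_prop) (by fun_prop (disch := assumption))
      fun q => norm_normalizedGeodesicFlow_fst_sq_sub_one (t q)
  · exact hkernel (hasFDerivAt_inner_fst_snd _) (by fun_prop) (by fun_prop)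
      fun q => inner_normalizedGeodesicFlow_fst_snd (t q)

end SphereCotangentBundle

/-- For `(x,y) ∈ M_n` with `y ≠ 0`, the Fréchet derivative of the Dehn–Seidel twist `τ_g`
at `(x,y)` maps the tangent space `T_{(x,y)}M_n` into the tangent space
`T_{τ_g(x,y)}M_n`. -/
theorem stmt_12 (n : ℕ) (g : ℝ → ℝ) (hg : Differentiable ℝ g)
    (x y : EuclideanSpace ℝ (Fin (n + 1)))
    (hx : ‖x‖ = 1) (hxy : ⟪x, y⟫ = 0) (hy : y ≠ 0)
    (a : EuclideanSpace ℝ (Fin (n + 1)) × EuclideanSpace ℝ (Fin (n + 1)))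
    (ha1 : ⟪x, a.1⟫ = 0) (ha2 : ⟪a.1, y⟫ + ⟪x, a.2⟫ = 0) :
    ⟪(dehnTwist g (x, y)).1, (fderiv ℝ (dehnTwist g) (x, y) a).1⟫ = 0 ∧
      ⟪(fderiv ℝ (dehnTwist g) (x, y) a).1, (dehnTwist g (x, y)).2⟫ +
        ⟪(dehnTwist g (x, y)).1, (fderiv ℝ (dehnTwist g) (x, y) a).2⟫ = 0 := by
  have hnorm : DifferentiableAt ℝ (fun q : _ × EuclideanSpace ℝ (Fin (n + 1)) => ‖q.2‖) (x, y) :=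
    differentiableAt_snd.norm ℝ hy
  exact mem_sphereCotangentTangentSpace.1 <|
    stmt_12_general ((hg _).comp (x, y) hnorm) ⟨hx, hxy⟩ hy
      (mem_sphereCotangentTangentSpace.2 ⟨ha1, ha2⟩)
end
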